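/- (MSA with soft maximization equals gradient descent with back-propagation; Proposition 4.) In the discrete-time setting with all g_n(·,·), Φ, and L differentiable, define the co-states p_N := −∇Φ(x_N), p_n := ∇_x H_n(x_n, p_{n+1}, ϑ_n) for n = N−1,…,0, and the total loss J(ϑ) := Φ(x_N) + δ∑_{n=0}^{N−1} L(ϑ_n). Then for every n = 0,…,N−1, ∇_{ϑ_n} J(ϑ) = −∇_ϑ H_n(x_n, p_{n+1}, ϑ_n). Consequently, for any learning rate η > 0, the update ϑ′_n = ϑ_n + η ∇_ϑ H_n(x_n, p_{n+1}, ϑ_n) coincides with the gradient-descent step ϑ′_n = ϑ_n − η ∇_{ϑ_n} J(ϑ). -/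

import Mathlib

open Set
open scoped RealInnerProductSpace

noncomputable section

/-- Euclidean space `ℝ^n`. -/
abbrev Euc (n : ℕ) : Type := EuclideanSpace ℝ (Fin n)

/-- `flow g ϑ n k` is the `k`-step discrete flow starting at layer `n`:
`flow g ϑ n 0 = id` and `flow g ϑ n (k+1) = g (n+k) (flow g ϑ n k ·) (ϑ (n+k))`.
In particular `flow g ϑ 0 n x0` is the layer-`n` state `x_n` with input `x_0 = x0`. -/
def flow {d m : ℕ} (g : ℕ → Euc d → Euc m → Euc d) (ϑ : ℕ → Euc m) (n : ℕ) :
    ℕ → Euc d → Euc d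
  | 0 => id
  | k + 1 => fun y => g (n + k) (flow g ϑ n k y) (ϑ (n + k))

/-- The discrete Hamiltonian `H_n(x, p, ϑ) = ⟪p, g_n(x, ϑ)⟫ - δ L(ϑ)`. -/
def dHam {d m : ℕ} (g : ℕ → Euc d → Euc m → Euc d) (L : Euc m → ℝ) (δ : ℝ)
    (n : ℕ) (x : Euc d) (pp : Euc d) (ϑ : Euc m) : ℝ :=
  ⟪pp, g n x ϑ⟫ - δ * L ϑ

/-!
Perturbing `ϑ_n` moves every later state: let `A_k` be the derivative of `x_k` in `ϑ_n`, `k > n`.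
These tangent maps obey `A_{k+1} = (∂ₓ g_k) A_k`, while the co-states obey the adjoint recursion
`p_k = (∂ₓ g_k)† p_{k+1}`, the term `-δ L` of the Hamiltonian being constant in the state. Hence
`A_k† p_k` does not depend on `k`. Its value at `k = n + 1` is `(∂_ϑ g_n)† p_{n+1}`, the
`ϑ`-gradient of `H_n` up to the running cost; its value at `k = N` is `-A_N† ∇Φ(x_N)`, the negative
gradient of the terminal cost.
-/

section Gradient

open InnerProductSpace ContinuousLinearMap

variable {𝕜 E F : Type*} [RCLike 𝕜]
  [NormedAddCommGroup E] [InnerProductSpace 𝕜 E] [CompleteSpace E]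
  [NormedAddCommGroup F] [InnerProductSpace 𝕜 F] [CompleteSpace F]

theorem hasGradientAt_inner_right (p x : E) : HasGradientAt (fun y => inner 𝕜 p y) p x :=
  hasGradientAt_iff_hasFDerivAt.2 (toDual 𝕜 E p).hasFDerivAt

theorem hasGradientAt_add {f h : E → 𝕜} {f' h' x : E}
    (hf : HasGradientAt f f' x) (hh : HasGradientAt h h' x) :
    HasGradientAt (fun y => f y + h y) (f' + h') x := by
  rw [hasGradientAt_iff_hasFDerivAt] at *
  simpa only [map_add] using hf.fun_add hh

theorem hasGradientAt_sub {f h : E → 𝕜} {f' h' x : E}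
    (hf : HasGradientAt f f' x) (hh : HasGradientAt h h' x) :
    HasGradientAt (fun y => f y - h y) (f' - h') x := by
  rw [hasGradientAt_iff_hasFDerivAt] at *
  simpa only [map_sub] using hf.fun_sub hh

theorem hasGradientAt_const_mul {f : E → 𝕜} {f' x : E} (c : 𝕜) (hf : HasGradientAt f f' x) :
    HasGradientAt (fun y => c * f y) (starRingEnd 𝕜 c • f') x := by
  rw [hasGradientAt_iff_hasFDerivAt] at *
  simpa only [map_smulₛₗ, RCLike.conj_conj] using hf.const_mul c

theorem hasGradientAt_comp_hasFDerivAt {φ : F → 𝕜} {f : E → F} {p : F} {f' : E →L[𝕜] F} {x : E}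
    (hφ : HasGradientAt φ p (f x)) (hf : HasFDerivAt f f' x) :
    HasGradientAt (fun y => φ (f y)) (adjoint f' p) x := by
  have hdual : toDual 𝕜 E (adjoint f' p) = toDual 𝕜 F p ∘L f' :=
    ContinuousLinearMap.ext fun v => adjoint_inner_left f' v p
  rw [hasGradientAt_iff_hasFDerivAt] at *
  rw [hdual]
  exact hφ.comp x hf

theorem hasGradientAt_sum_update {ι : Type*} [DecidableEq ι] {W : ι → Type*} {i : ι}
    [NormedAddCommGroup (W i)] [InnerProductSpace 𝕜 (W i)] [CompleteSpace (W i)]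
    {L : ∀ j, W j → 𝕜} {ϑ : ∀ j, W j} {l : W i} {s : Finset ι} (hi : i ∈ s)
    (hL : HasGradientAt (L i) l (ϑ i)) :
    HasGradientAt (fun w => ∑ j ∈ s, L j (Function.update ϑ i w j)) l (ϑ i) := by
  simp only [Function.apply_update L, Finset.sum_update_of_mem hi]
  simpa only [add_zero] using hasGradientAt_add hL (hasGradientAt_const _ _)

end Gradient

section Hamiltonian

open ContinuousLinearMap

variable {X W Y : Type*} [NormedAddCommGroup Y] [InnerProductSpace ℝ Y]

/-- The Hamiltonian `H(x, p, w) = ⟪p, f(x, w)⟫ - δ ℓ(w)` of a single layer `f : X → W → Y` with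
running cost `ℓ`, extending `dHam` to layers between different spaces. -/
def hamiltonian (f : X → W → Y) (ℓ : W → ℝ) (δ : ℝ) (x : X) (p : Y) (w : W) : ℝ :=
  ⟪p, f x w⟫ - δ * ℓ w

variable [CompleteSpace Y] {f : X → W → Y} {x : X} {w : W}

theorem hasGradientAt_hamiltonian_state [NormedAddCommGroup X] [InnerProductSpace ℝ X]
    [CompleteSpace X] {f' : X →L[ℝ] Y} (hf : HasFDerivAt (fun y => f y w) f' x)
    (ℓ : W → ℝ) (δ : ℝ) (p : Y) :
    HasGradientAt (fun y => hamiltonian f ℓ δ y p w) (adjoint f' p) x := by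
  simpa only [hamiltonian, sub_zero] using hasGradientAt_sub
    (hasGradientAt_comp_hasFDerivAt (hasGradientAt_inner_right p _) hf)
    (hasGradientAt_const x (δ * ℓ w))

theorem hasGradientAt_hamiltonian_param [NormedAddCommGroup W] [InnerProductSpace ℝ W]
    [CompleteSpace W] {f' : W →L[ℝ] Y} {ℓ : W → ℝ} {ℓ' : W} (hf : HasFDerivAt (f x) f' w)
    (hℓ : HasGradientAt ℓ ℓ' w) (δ : ℝ) (p : Y) :
    HasGradientAt (fun v => hamiltonian f ℓ δ x p v) (adjoint f' p - δ • ℓ') w :=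
  hasGradientAt_sub (hasGradientAt_comp_hasFDerivAt (hasGradientAt_inner_right p _) hf)
    (hasGradientAt_const_mul δ hℓ)

end Hamiltonian

section Network

open Function ContinuousLinearMap

variable {E W : ℕ → Type*}

/-- The states `x_0 = x₀`, `x_{n+1} = g_n(x_n, ϑ_n)` of a layered network whose state space `E n`
and parameter space `W n` may change from layer to layer. -/
def layerState (g : ∀ n, E n → W n → E (n + 1)) (ϑ : ∀ n, W n) (x₀ : E 0) : ∀ n, E n
  | 0 => x₀
  | n + 1 => g n (layerState g ϑ x₀ n) (ϑ n)

theorem layerState_update_of_le (g : ∀ n, E n → W n → E (n + 1)) (ϑ : ∀ n, W n) (x₀ : E 0)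
    {n k : ℕ} (hk : k ≤ n) (w : W n) :
    layerState g (update ϑ n w) x₀ k = layerState g ϑ x₀ k := by
  induction k with
  | zero => rfl
  | succ k ih =>
    have hne : k ≠ n := by lia
    simp only [layerState, ih (by lia), update_of_ne hne]

theorem layerState_update_succ_self (g : ∀ n, E n → W n → E (n + 1)) (ϑ : ∀ n, W n) (x₀ : E 0)
    (n : ℕ) (w : W n) :
    layerState g (update ϑ n w) x₀ (n + 1) = g n (layerState g ϑ x₀ n) w := by
  simp only [layerState, layerState_update_of_le g ϑ x₀ le_rfl, update_self]

theorem layerState_update_succ_of_ne (g : ∀ n, E n → W n → E (n + 1)) (ϑ : ∀ n, W n) (x₀ : E 0)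
    {n k : ℕ} (hk : k ≠ n) (w : W n) :
    layerState g (update ϑ n w) x₀ (k + 1) =
      g k (layerState g (update ϑ n w) x₀ k) (ϑ k) := by
  simp only [layerState, update_of_ne hk]

/-- The total loss `J(ϑ) = Φ(x_N) + δ ∑_{k<N} L_k(ϑ_k)`: terminal cost plus running costs. -/
def totalLoss (g : ∀ n, E n → W n → E (n + 1)) (L : ∀ n, W n → ℝ) (δ : ℝ) (x₀ : E 0) {N : ℕ}
    (Φ : E N → ℝ) (ϑ : ∀ n, W n) : ℝ :=
  Φ (layerState g ϑ x₀ N) + δ * ∑ k ∈ Finset.range N, L k (ϑ k)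

variable [∀ n, NormedAddCommGroup (E n)] [∀ n, InnerProductSpace ℝ (E n)]
  [∀ n, CompleteSpace (E n)] {n N : ℕ}
  [NormedAddCommGroup (W n)] [InnerProductSpace ℝ (W n)] [CompleteSpace (W n)]
  {g : ∀ n, E n → W n → E (n + 1)} {L : ∀ n, W n → ℝ} {δ : ℝ} {ϑ : ∀ n, W n} {x₀ : E 0}
  {p : ∀ n, E n}

theorem exists_hasFDerivAt_layerState_adjoint_costate_eq {B : W n →L[ℝ] E (n + 1)}
    (hB : HasFDerivAt (g n (layerState g ϑ x₀ n)) B (ϑ n))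
    (hg : ∀ k ∈ Ioo n N, DifferentiableAt ℝ (fun y => g k y (ϑ k)) (layerState g ϑ x₀ k))
    (hp : ∀ k ∈ Ioo n N, p k =
      gradient (fun y => hamiltonian (g k) (L k) δ y (p (k + 1)) (ϑ k)) (layerState g ϑ x₀ k))
    (hn : n < N) :
    ∃ A : W n →L[ℝ] E N, HasFDerivAt (fun w => layerState g (update ϑ n w) x₀ N) A (ϑ n) ∧
      adjoint A (p N) = adjoint B (p (n + 1)) := by
  induction N, hn using Nat.le_induction with
  | base => exact ⟨B, by simpa only [layerState_update_succ_self] using hB, rfl⟩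
  | succ k hk ih =>
    have hsub : Ioo n k ⊆ Ioo n (k + 1) := Ioo_subset_Ioo_right k.le_succ
    have hmem : k ∈ Ioo n (k + 1) := ⟨hk, k.lt_succ_self⟩
    obtain ⟨A, hA, hadj⟩ := ih (fun i hi => hg i (hsub hi)) (fun i hi => hp i (hsub hi))
    obtain ⟨C, hC⟩ := hg k hmem
    have hpk : p k = adjoint C (p (k + 1)) :=
      (hp k hmem).trans (hasGradientAt_hamiltonian_state hC (L k) δ _).gradient
    refine ⟨C ∘L A, ?_, ?_⟩
    · simp only [layerState_update_succ_of_ne g ϑ x₀ hmem.1.ne']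
      exact HasFDerivAt.comp (ϑ n) (by rwa [update_eq_self]) hA
    · rw [adjoint_comp, ContinuousLinearMap.comp_apply, ← hpk, hadj]

theorem msa_soft_maximization_is_backprop_general {Φ : E N → ℝ} (hn : n < N)
    (hgx : ∀ k ∈ Ioo n N, DifferentiableAt ℝ (fun y => g k y (ϑ k)) (layerState g ϑ x₀ k))
    (hgϑ : DifferentiableAt ℝ (g n (layerState g ϑ x₀ n)) (ϑ n))
    (hΦ : DifferentiableAt ℝ Φ (layerState g ϑ x₀ N)) (hL : DifferentiableAt ℝ (L n) (ϑ n))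
    (hpN : p N = -gradient Φ (layerState g ϑ x₀ N))
    (hp : ∀ k ∈ Ioo n N, p k =
      gradient (fun y => hamiltonian (g k) (L k) δ y (p (k + 1)) (ϑ k)) (layerState g ϑ x₀ k)) :
    HasGradientAt (fun w => totalLoss g L δ x₀ Φ (update ϑ n w))
      (-gradient (hamiltonian (g n) (L n) δ (layerState g ϑ x₀ n) (p (n + 1))) (ϑ n)) (ϑ n) ∧
    ∀ η : ℝ,
      ϑ n + η • gradient (hamiltonian (g n) (L n) δ (layerState g ϑ x₀ n) (p (n + 1))) (ϑ n) =
        ϑ n - η • gradient (fun w => totalLoss g L δ x₀ Φ (update ϑ n w)) (ϑ n) := by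
  obtain ⟨B, hB⟩ := hgϑ
  obtain ⟨A, hA, hadj⟩ := exists_hasFDerivAt_layerState_adjoint_costate_eq hB hgx hp hn
  have hΦx : HasGradientAt Φ (-p N) (layerState g (update ϑ n (ϑ n)) x₀ N) := by
    rw [hpN, neg_neg, update_eq_self]
    exact hΦ.hasGradientAt
  have hJ : HasGradientAt (fun w => totalLoss g L δ x₀ Φ (update ϑ n w))
      (adjoint A (-p N) + δ • gradient (L n) (ϑ n)) (ϑ n) :=
    hasGradientAt_add (hasGradientAt_comp_hasFDerivAt hΦx hA) <| hasGradientAt_const_mul δ <|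
      hasGradientAt_sum_update (Finset.mem_range.2 hn) hL.hasGradientAt
  have hH := (hasGradientAt_hamiltonian_param hB hL.hasGradientAt δ (p (n + 1))).gradient
  rw [map_neg, hadj, neg_add_eq_sub, ← neg_sub, ← hH] at hJ
  exact ⟨hJ, fun η => by rw [hJ.gradient, smul_neg, sub_neg_eq_add]⟩

end Network

theorem flow_zero_eq_layerState {d m : ℕ} (g : ℕ → Euc d → Euc m → Euc d) (ϑ : ℕ → Euc m)
    (n : ℕ) (x : Euc d) :
    flow g ϑ 0 n x = layerState (E := fun _ => Euc d) g ϑ x n := by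
  induction n with
  | zero => rfl
  | succ n ih => simp only [flow, layerState, zero_add, ih]

/-- **MSA with soft maximization equals gradient descent with back-propagation**
(Proposition 4).  With states `x_n = flow g ϑ 0 n x0`, co-states `p_N = -∇Φ(x_N)`,
`p_n = ∇ₓH_n(x_n, p_{n+1}, ϑ_n)`, and total loss
`J(ϑ) = Φ(x_N) + δ ∑_{n<N} L(ϑ_n)` (viewed, for each `n`, as a function of the single
parameter `ϑ_n`), one has `∇_{ϑ_n} J(ϑ) = -∇_ϑ H_n(x_n, p_{n+1}, ϑ_n)`; consequently the
soft-maximization update `ϑ_n + η ∇_ϑ H_n` coincides with the gradient-descent step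
`ϑ_n - η ∇_{ϑ_n} J(ϑ)`. -/
theorem msa_soft_maximization_is_backprop
    (d m N : ℕ) (δ : ℝ) (hδ : 0 < δ) (Θ : Set (Euc m)) (hΘ : IsOpen Θ)
    (g : ℕ → Euc d → Euc m → Euc d) (L : Euc m → ℝ) (Φ : Euc d → ℝ)
    (hg : ∀ n, Differentiable ℝ fun q : Euc d × Euc m => g n q.1 q.2)
    (hΦ : Differentiable ℝ Φ) (hL : Differentiable ℝ L)
    (ϑ : ℕ → Euc m) (hϑ : ∀ n, ϑ n ∈ Θ)
    (x0 : Euc d)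
    (ps : ℕ → Euc d)
    (hpN : ps N = -gradient Φ (flow g ϑ 0 N x0))
    (hps : ∀ n < N, ps n =
      gradient (fun y => dHam g L δ n y (ps (n + 1)) (ϑ n)) (flow g ϑ 0 n x0)) :
    ∀ n < N,
      gradient
          (fun w : Euc m =>
            Φ (flow g (Function.update ϑ n w) 0 N x0) +
              δ * ∑ k ∈ Finset.range N, L (Function.update ϑ n w k)) (ϑ n) =
        -(gradient (fun w => dHam g L δ n (flow g ϑ 0 n x0) (ps (n + 1)) w) (ϑ n)) ∧
      ∀ η : ℝ, 0 < η →
        ϑ n + η • gradient (fun w => dHam g L δ n (flow g ϑ 0 n x0) (ps (n + 1)) w) (ϑ n) =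
          ϑ n - η • gradient
            (fun w : Euc m =>
              Φ (flow g (Function.update ϑ n w) 0 N x0) +
                δ * ∑ k ∈ Finset.range N, L (Function.update ϑ n w k)) (ϑ n) := by
  intro n hn
  simp only [flow_zero_eq_layerState] at hpN hps ⊢
  obtain ⟨hJ, hstep⟩ := msa_soft_maximization_is_backprop_general (E := fun _ => Euc d)
    (W := fun _ => Euc m) (L := fun _ => L) hn (fun k _ => by fun_prop)
    (by fun_prop) (hΦ _) (hL _) hpN fun k hk => hps k hk.2
  exact ⟨hJ.gradient, fun η _ => hstep η⟩
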